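/- In the non-existence instance, let γ be the randomized contract placing probability 1/2 on each of the deterministic contracts p^1 = (0, 1/4) and p^2 = (0, 3/4) (payments listed as (p_{ω1}, p_{ω2})). Then sup_{c∈C}(OPT(c) − U^p(γ,c)) = 5/8, and this supremum is not attained: OPT(c) − U^p(γ,c) < 5/8 for every c ∈ C. -/

import Mathlib

open Finset

variable {A Ω : Type} [Fintype A] [Fintype Ω] [Nonempty A] [Nonempty Ω]

/-- Agent's expected utility `U^a(p,c,a)` of action `a` under contract `p` and costs `c`. -/
noncomputable def Uag (F : A → Ω → ℝ) (p : Ω → ℝ) (c : A → ℝ) (a : A) : ℝ :=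
  (∑ ω, F a ω * p ω) - c a

/-- Principal's expected utility when the agent plays action `a` under contract `p`. -/
noncomputable def prinAct (F : A → Ω → ℝ) (r p : Ω → ℝ) (a : A) : ℝ :=
  ∑ ω, F a ω * (r ω - p ω)

/-- Principal's expected utility `U^p(p,c)`: the agent plays a best response,
with ties among best responses broken in favor of the principal. -/
noncomputable def Uprin (F : A → Ω → ℝ) (r p : Ω → ℝ) (c : A → ℝ) : ℝ :=
  sSup { x | ∃ a : A, (∀ a' : A, Uag F p c a' ≤ Uag F p c a) ∧ x = prinAct F r p a }

/-- A deterministic contract: nonnegative payments. -/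
def IsContract (p : Ω → ℝ) : Prop := ∀ ω, 0 ≤ p ω

/-- `OPT(c)`: the supremum over contracts of the principal's expected utility against `c`. -/
noncomputable def OPT (F : A → Ω → ℝ) (r : Ω → ℝ) (c : A → ℝ) : ℝ :=
  sSup { x | ∃ p : Ω → ℝ, IsContract p ∧ x = Uprin F r p c }

/-- The regret `R(p)` of a deterministic contract `p`. -/
noncomputable def regret (F : A → Ω → ℝ) (r : Ω → ℝ) (C : Set (A → ℝ)) (p : Ω → ℝ) : ℝ :=
  sSup { x | ∃ c ∈ C, x = OPT F r c - Uprin F r p c }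

/-- Uncertainty level `d(C)`: the L∞-diameter of the uncertainty set. -/
noncomputable def uncLevel (C : Set (A → ℝ)) : ℝ :=
  sSup { x | ∃ c ∈ C, ∃ c' ∈ C, x = ‖c - c'‖ }

/-- The assumptions defining a principal–agent instance `(A, Ω, r, C, F)`. -/
structure IsPAInstance (F : A → Ω → ℝ) (r : Ω → ℝ) (C : Set (A → ℝ)) : Prop where
  r_mem : ∀ ω, r ω ∈ Set.Icc (0:ℝ) 1
  F_mem : ∀ a ω, F a ω ∈ Set.Icc (0:ℝ) 1
  F_sum : ∀ a, ∑ ω, F a ω = 1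
  C_nonempty : C.Nonempty
  C_mem : ∀ c ∈ C, ∀ a, c a ∈ Set.Icc (0:ℝ) 1
  zero_action : ∃ a : A, ∀ c ∈ C, c a = 0

/-- A randomized contract: a finitely supported probability distribution over
deterministic contracts, represented as a finite tuple of contracts with probabilities. -/
structure RandCon (Ω : Type) where
  n : ℕ
  ps : Fin n → Ω → ℝ
  q : Fin n → ℝ
  q_nonneg : ∀ i, 0 ≤ q i
  q_sum : ∑ i, q i = 1

/-- All the contracts in the support are genuine (nonnegative) contracts. -/
def RandCon.valid {Ω : Type} (γ : RandCon Ω) : Prop := ∀ i ω, 0 ≤ γ.ps i ω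

/-- Agent's expected utility `U^a(γ,c)` of a randomized contract. -/
noncomputable def UagRand (F : A → Ω → ℝ) (γ : RandCon Ω) (c : A → ℝ) : ℝ :=
  ∑ i, γ.q i * (⨆ a : A, Uag F (γ.ps i) c a)

/-- Principal's expected utility `U^p(γ,c)` of a randomized contract. -/
noncomputable def UprinRand (F : A → Ω → ℝ) (r : Ω → ℝ) (γ : RandCon Ω) (c : A → ℝ) : ℝ :=
  ∑ i, γ.q i * Uprin F r (γ.ps i) c

/-- The regret `R(γ)` of a randomized contract. -/
noncomputable def regretRand (F : A → Ω → ℝ) (r : Ω → ℝ) (C : Set (A → ℝ))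
    (γ : RandCon Ω) : ℝ :=
  sSup { x | ∃ c ∈ C, x = OPT F r c - UprinRand F r γ c }

/-- Principal's expected utility `U^p(Γ,c)` under a menu of randomized contracts:
the agent selects an element maximizing its own expected utility, breaking ties in
favor of the principal. -/
noncomputable def UprinRMenu (F : A → Ω → ℝ) (r : Ω → ℝ) {K : ℕ} (Γ : Fin K → RandCon Ω)
    (c : A → ℝ) : ℝ :=
  sSup { x | ∃ i : Fin K, (∀ j : Fin K, UagRand F (Γ j) c ≤ UagRand F (Γ i) c) ∧
    x = UprinRand F r (Γ i) c }

/-- The regret `R(Γ)` of a menu of randomized contracts. -/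
noncomputable def regretRMenu (F : A → Ω → ℝ) (r : Ω → ℝ) (C : Set (A → ℝ)) {K : ℕ}
    (Γ : Fin K → RandCon Ω) : ℝ :=
  sSup { x | ∃ c ∈ C, x = OPT F r c - UprinRMenu F r Γ c }

/-- The randomized contract placing probability `1/2` on each of two given
deterministic contracts. -/
noncomputable def uniform2 {Ω : Type} (p1 p2 : Ω → ℝ) : RandCon Ω where
  n := 2
  ps := ![p1, p2]
  q := fun _ => 1/2
  q_nonneg := fun _ => by norm_num
  q_sum := by norm_num [Fin.sum_univ_two]

/-!
The agent can secure utility `0`, so the principal gets at most the largest surplus of an action,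
and since the outcome reveals the action she gets exactly that by reimbursing the costs. Writing `x`
for the cost of effort, `OPT = 1 - x`. A bonus `t` earns `1 - t` when `x ≤ t` and `0` when `x > t`,
so the regret of mixing the bonuses `s < t` is `(s + t) / 2 - x` on `[0, s]`, `(1 + t) / 2 - x` on
`(s, t]` and `1 - x` on `(t, 1]`. For `s = 1/4` and `t = 3/4` the middle piece dominates; it tends
to `5/8` as `x` decreases to `s`, but at `x = s` the agent still accepts the smaller bonus.
-/

section PrincipalAgent

variable {Act Out : Type} [Fintype Out] {F : Act → Out → ℝ} {r p : Out → ℝ} {c : Act → ℝ}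

/-- `a` is a best response of the agent to the contract `p` under costs `c`, that is, it belongs
to the set `A*(p, c)`. -/
def IsBestResponse (F : Act → Out → ℝ) (p : Out → ℝ) (c : Act → ℝ) (a : Act) : Prop :=
  ∀ a', Uag F p c a' ≤ Uag F p c a

theorem uprin_eq_prinAct {a : Act} (ha : IsBestResponse F p c a)
    (htie : ∀ b, IsBestResponse F p c b → prinAct F r p b ≤ prinAct F r p a) :
    Uprin F r p c = prinAct F r p a := by
  refine IsGreatest.csSup_eq ⟨⟨a, ha, rfl⟩, ?_⟩
  rintro _ ⟨b, hb, rfl⟩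
  exact htie b hb

-- `Uag F r c a` is the total surplus of `a`: the contract `r` hands the whole reward to the agent.
theorem prinAct_add_uag (F : Act → Out → ℝ) (r p : Out → ℝ) (c : Act → ℝ) (a : Act) :
    prinAct F r p a + Uag F p c a = Uag F r c a := by
  simp only [prinAct, Uag, mul_sub, sum_sub_distrib]
  ring

theorem uag_nonneg {a : Act} (hF : ∀ ω, 0 ≤ F a ω) (hp : IsContract p) (hc : c a ≤ 0) :
    0 ≤ Uag F p c a :=
  sub_nonneg.2 (hc.trans (sum_nonneg fun ω _ => mul_nonneg (hF ω) (hp ω)))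

theorem uprin_le_of_forall_surplus_le {a₀ : Act} {w : ℝ} (hF : ∀ ω, 0 ≤ F a₀ ω)
    (hc : c a₀ ≤ 0) (hr : IsContract r) (hp : IsContract p) (hw : ∀ a, Uag F r c a ≤ w) :
    Uprin F r p c ≤ w := by
  refine Real.sSup_le ?_ ((uag_nonneg hF hr hc).trans (hw a₀))
  rintro _ ⟨a, ha, rfl⟩
  have agent_nonneg : 0 ≤ Uag F p c a := (uag_nonneg hF hp hc).trans (ha a₀)
  linarith [prinAct_add_uag F r p c a, hw a]

theorem uprinRand_uniform2 (F : Act → Out → ℝ) (r p₁ p₂ : Out → ℝ) (c : Act → ℝ) :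
    UprinRand F r (uniform2 p₁ p₂) c = (Uprin F r p₁ c + Uprin F r p₂ c) / 2 := by
  change ∑ i : Fin 2, 1 / 2 * Uprin F r (![p₁, p₂] i) c = _
  rw [Fin.sum_univ_two, Matrix.cons_val_zero, Matrix.cons_val_one,
    Matrix.cons_val_fin_one]
  ring

end PrincipalAgent

section Revealing

variable {Act : Type} [DecidableEq Act]

/-- The outcome matrix under which the outcome is the action itself, so that paying for outcomes
amounts to paying for actions. -/
def revealing (Act : Type) [DecidableEq Act] : Act → Act → ℝ := fun a ω => if a = ω then 1 else 0

theorem revealing_nonneg (a ω : Act) : 0 ≤ revealing Act a ω := by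
  unfold revealing
  positivity

variable [Fintype Act]

theorem uag_revealing (p c : Act → ℝ) (a : Act) : Uag (revealing Act) p c a = p a - c a := by
  simp [Uag, revealing]

theorem prinAct_revealing (r p : Act → ℝ) (a : Act) :
    prinAct (revealing Act) r p a = r a - p a := by
  simp [prinAct, revealing]

theorem opt_revealing {r c : Act → ℝ} {a₀ b : Act} (hr : IsContract r) (hc : IsContract c)
    (ha₀ : c a₀ = 0) (hb : ∀ a, r a - c a ≤ r b - c b) :
    OPT (revealing Act) r c = r b - c b := by
  -- Under the contract `c` every action leaves the agent with utility `0`.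
  have reimburse : Uprin (revealing Act) r c c = r b - c b := by
    rw [← prinAct_revealing r c b]
    refine uprin_eq_prinAct (fun a => by simp only [uag_revealing, sub_self, le_refl]) fun a _ => ?_
    simpa only [prinAct_revealing] using hb a
  refine IsGreatest.csSup_eq ⟨⟨c, hc, reimburse.symm⟩, ?_⟩
  rintro _ ⟨p, hp, rfl⟩
  refine uprin_le_of_forall_surplus_le (revealing_nonneg a₀) ha₀.le hr hp fun a => ?_
  simpa only [uag_revealing] using hb a

end Revealing

section Bonus

variable {s t : ℝ} {c : Fin 2 → ℝ}

/-- The vector `(0, t)`: the contract paying `t` exactly for the outcome of the effort action `1`.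
The reward vector of the non-existence instance is `bonus 1`. -/
def bonus (t : ℝ) : Fin 2 → ℝ := fun ω => if ω = 1 then t else 0

@[simp] theorem bonus_zero (t : ℝ) : bonus t 0 = 0 := rfl

@[simp] theorem bonus_one (t : ℝ) : bonus t 1 = t := rfl

theorem isContract_bonus (ht : 0 ≤ t) : IsContract (bonus t) :=
  Fin.forall_fin_two.2 ⟨le_rfl, ht⟩

/-- The uncertainty set of the non-existence instance: the action `0` is free and the effort
action `1` has an arbitrary cost in `[0, 1]`. -/
def effortCosts : Set (Fin 2 → ℝ) := {c | c 0 = 0 ∧ 0 ≤ c 1 ∧ c 1 ≤ 1}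

theorem bonus_mem_effortCosts (ht₀ : 0 ≤ t) (ht₁ : t ≤ 1) : bonus t ∈ effortCosts :=
  ⟨rfl, ht₀, ht₁⟩

theorem opt_bonus_one (hc : c ∈ effortCosts) : OPT (revealing (Fin 2)) (bonus 1) c = 1 - c 1 := by
  obtain ⟨hc₀, hc_nonneg, hc_le⟩ := hc
  have hcontract : IsContract c := Fin.forall_fin_two.2 ⟨hc₀.ge, hc_nonneg⟩
  refine opt_revealing (b := 1) (isContract_bonus zero_le_one) hcontract hc₀ ?_
  simpa [Fin.forall_fin_two, hc₀] using hc_le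

theorem isBestResponse_bonus_one_iff (hc₀ : c 0 = 0) :
    IsBestResponse (revealing (Fin 2)) (bonus t) c 1 ↔ c 1 ≤ t := by
  simp [IsBestResponse, uag_revealing, Fin.forall_fin_two, hc₀]

theorem isBestResponse_bonus_zero_iff (hc₀ : c 0 = 0) :
    IsBestResponse (revealing (Fin 2)) (bonus t) c 0 ↔ t ≤ c 1 := by
  simp [IsBestResponse, uag_revealing, Fin.forall_fin_two, hc₀]

theorem uprin_bonus_of_le (hc₀ : c 0 = 0) (hct : c 1 ≤ t) (ht : t ≤ 1) :
    Uprin (revealing (Fin 2)) (bonus 1) (bonus t) c = 1 - t := by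
  rw [uprin_eq_prinAct ((isBestResponse_bonus_one_iff hc₀).2 hct), prinAct_revealing, bonus_one,
    bonus_one]
  simpa [prinAct_revealing, Fin.forall_fin_two] using fun _ => ht

theorem uprin_bonus_of_lt (hc₀ : c 0 = 0) (htc : t < c 1) :
    Uprin (revealing (Fin 2)) (bonus 1) (bonus t) c = 0 := by
  rw [uprin_eq_prinAct ((isBestResponse_bonus_zero_iff hc₀).2 htc.le), prinAct_revealing,
    bonus_zero, bonus_zero, sub_zero]
  simp [Fin.forall_fin_two, isBestResponse_bonus_one_iff hc₀, htc]

/-- The regret under costs `c`, in the non-existence instance, of offering the bonuses `s` and `t`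
with probability `1/2` each. -/
noncomputable def mixedBonusRegret (s t : ℝ) (c : Fin 2 → ℝ) : ℝ :=
  OPT (revealing (Fin 2)) (bonus 1) c -
    UprinRand (revealing (Fin 2)) (bonus 1) (uniform2 (bonus s) (bonus t)) c

theorem mixedBonusRegret_of_le (hc : c ∈ effortCosts) (hcs : c 1 ≤ s) (hst : s ≤ t) (ht : t ≤ 1) :
    mixedBonusRegret s t c = (s + t) / 2 - c 1 := by
  rw [mixedBonusRegret, opt_bonus_one hc, uprinRand_uniform2,
    uprin_bonus_of_le hc.1 hcs (hst.trans ht), uprin_bonus_of_le hc.1 (hcs.trans hst) ht]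
  ring

theorem mixedBonusRegret_of_lt_of_le (hc : c ∈ effortCosts) (hsc : s < c 1) (hct : c 1 ≤ t)
    (ht : t ≤ 1) : mixedBonusRegret s t c = (1 + t) / 2 - c 1 := by
  rw [mixedBonusRegret, opt_bonus_one hc, uprinRand_uniform2, uprin_bonus_of_lt hc.1 hsc,
    uprin_bonus_of_le hc.1 hct ht]
  ring

theorem mixedBonusRegret_of_lt (hc : c ∈ effortCosts) (hst : s ≤ t) (htc : t < c 1) :
    mixedBonusRegret s t c = 1 - c 1 := by
  rw [mixedBonusRegret, opt_bonus_one hc, uprinRand_uniform2,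
    uprin_bonus_of_lt hc.1 (hst.trans_lt htc), uprin_bonus_of_lt hc.1 htc]
  ring

-- `3 * s < 1` says `(s + t) / 2 < (1 + t) / 2 - s`, and `1 + 2 * s ≤ 3 * t` says
-- `1 - t ≤ (1 + t) / 2 - s`: the middle piece dominates the outer two.
theorem mixedBonusRegret_lt (hst : s ≤ t) (ht : t ≤ 1) (hs : 3 * s < 1) (hst' : 1 + 2 * s ≤ 3 * t)
    (hc : c ∈ effortCosts) : mixedBonusRegret s t c < (1 + t) / 2 - s := by
  rcases le_or_gt (c 1) s with hcs | hsc
  · rw [mixedBonusRegret_of_le hc hcs hst ht]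
    linarith [hc.2.1]
  rcases le_or_gt (c 1) t with hct | htc
  · rw [mixedBonusRegret_of_lt_of_le hc hsc hct ht]
    linarith
  · rw [mixedBonusRegret_of_lt hc hst htc]
    linarith

theorem exists_lt_mixedBonusRegret (hs : 0 ≤ s) (hst : s < t) (ht : t ≤ 1) {w : ℝ}
    (hw : w < (1 + t) / 2 - s) : ∃ c ∈ effortCosts, w < mixedBonusRegret s t c := by
  obtain ⟨x, hsx, hx⟩ : ∃ x, s < x ∧ x < min t ((1 + t) / 2 - w) :=
    exists_between (lt_min hst (by linarith))
  obtain ⟨hxt, hxw⟩ := lt_min_iff.1 hx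
  have hmem : bonus x ∈ effortCosts := bonus_mem_effortCosts (hs.trans hsx.le) (hxt.le.trans ht)
  refine ⟨bonus x, hmem, ?_⟩
  rw [mixedBonusRegret_of_lt_of_le hmem hsx hxt.le ht, bonus_one]
  linarith

end Bonus

theorem nonexistence_instance_sup_not_attained_general {s t : ℝ} (hs₀ : 0 ≤ s) (hs : 3 * s < 1)
    (hst : 1 + 2 * s ≤ 3 * t) (ht : t ≤ 1) :
    regretRand (revealing (Fin 2)) (bonus 1) effortCosts (uniform2 (bonus s) (bonus t))
        = (1 + t) / 2 - s ∧
      ∀ c ∈ effortCosts, OPT (revealing (Fin 2)) (bonus 1) c -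
        UprinRand (revealing (Fin 2)) (bonus 1) (uniform2 (bonus s) (bonus t)) c
          < (1 + t) / 2 - s := by
  have s_lt_t : s < t := by linarith
  have not_attained : ∀ c ∈ effortCosts, mixedBonusRegret s t c < (1 + t) / 2 - s :=
    fun c hc => mixedBonusRegret_lt s_lt_t.le ht hs hst hc
  refine ⟨csSup_eq_of_forall_le_of_forall_lt_exists_gt ?_ ?_ ?_, not_attained⟩
  · exact ⟨_, bonus 0, bonus_mem_effortCosts le_rfl zero_le_one, rfl⟩
  · rintro _ ⟨c, hc, rfl⟩
    exact (not_attained c hc).le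
  · intro w hw
    obtain ⟨c, hc, hwc⟩ := exists_lt_mixedBonusRegret hs₀ s_lt_t ht hw
    exact ⟨_, ⟨c, hc, rfl⟩, hwc⟩

/-- In the non-existence instance, for the randomized contract placing
probability `1/2` on each of `p¹ = (0, 1/4)` and `p² = (0, 3/4)`, the supremum
`sup_{c∈C} (OPT(c) − U^p(γ,c))` equals `5/8` and is not attained. -/
theorem nonexistence_instance_sup_not_attained
    (F : Fin 2 → Fin 2 → ℝ) (hF : F = fun a ω => if a = ω then (1:ℝ) else 0)
    (r : Fin 2 → ℝ) (hr : r = fun ω => if ω = 1 then (1:ℝ) else 0)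
    (C : Set (Fin 2 → ℝ))
    (hC : C = {c | c 0 = 0 ∧ 0 ≤ c 1 ∧ c 1 ≤ 1})
    (p1 p2 : Fin 2 → ℝ)
    (hp1 : p1 = fun ω => if ω = 1 then (1/4 : ℝ) else 0)
    (hp2 : p2 = fun ω => if ω = 1 then (3/4 : ℝ) else 0) :
    sSup { x | ∃ c ∈ C, x = OPT F r c - UprinRand F r (uniform2 p1 p2) c } = 5/8 ∧
      ∀ c ∈ C, OPT F r c - UprinRand F r (uniform2 p1 p2) c < 5/8 := by
  subst hF hr hC hp1 hp2
  rw [show (5 / 8 : ℝ) = (1 + 3 / 4) / 2 - 1 / 4 by norm_num]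
  exact nonexistence_instance_sup_not_attained_general (by norm_num) (by norm_num) (by norm_num)
    (by norm_num)
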